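/- The Split-AI privacy guarantee holds even in the stronger worst-case game in which the adversary chooses the challenge index: for every dataset x : Fin (2n) → 𝒳, every training map train, every FIXED index i ∈ Fin (2n), and every adversary A : Fin (2n) × (Fin k → ℝ) → PMF Bool, the probability (over the membership vector b, the non-model index sets Id_non, the choice i', and A's internal randomness) that A(i, r_i) outputs b i is exactly 1/2. -/

import Mathlib

/-!
Statement 1: The Split-AI privacy guarantee in the stronger worst-case game where the
adversary chooses the challenge index: for every fixed index `i`, every adversary's
success probability is exactly 1/2.
-/

open scoped BigOperators

noncomputable section

/-- Boolean vectors of length `2n` with Hamming weight exactly `n`. -/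
def weightVectors (n : ℕ) : Finset (Fin (2 * n) → Bool) :=
  Finset.univ.filter (fun b => (Finset.univ.filter (fun i => b i = true)).card = n)

lemma weightVectors_nonempty (n : ℕ) : (weightVectors n).Nonempty := by
  obtain ⟨S, -, hS⟩ :=
    Finset.exists_subset_card_eq
      (show n ≤ (Finset.univ : Finset (Fin (2 * n))).card by simp; omega)
  refine ⟨fun i => decide (i ∈ S), ?_⟩
  simp only [weightVectors, Finset.mem_filter, Finset.mem_univ, true_and]
  have h : Finset.univ.filter (fun i : Fin (2 * n) => decide (i ∈ S) = true) = S := by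
    ext i; simp
  rw [h, hS]

/-- The member set `S = {i : b i = true}`. -/
def memberSet {n : ℕ} (b : Fin (2 * n) → Bool) : Finset (Fin (2 * n)) :=
  Finset.univ.filter (fun i => b i = true)

/-- Assignments of an `L`-element subset of `Fin K` (the non-model indices) to
each index of the dataset. -/
def idnonFuns (n K L : ℕ) : Finset (Fin (2 * n) → Finset (Fin K)) :=
  Finset.univ.filter (fun f => ∀ i, (f i).card = L)

lemma idnonFuns_nonempty (n K L : ℕ) (hLK : L ≤ K) : (idnonFuns n K L).Nonempty := by
  obtain ⟨T, -, hT⟩ :=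
    Finset.exists_subset_card_eq
      (show L ≤ (Finset.univ : Finset (Fin K)).card by simpa using hLK)
  exact ⟨fun _ => T, by simp [idnonFuns, hT]⟩

/-- Uniform distribution on a finset, with a default value if the finset is empty. -/
def uniformOn' {α : Type*} (s : Finset α) (d : α) : PMF α :=
  if h : s.Nonempty then PMF.uniformOfFinset s h else PMF.pure d

/-- The sub-model `F_m`, trained (via `train`) on the data points of the members `j`
with `m ∉ Id_non(j)`. -/
def subModel {n K k : ℕ} {𝒳 : Type*} [DecidableEq 𝒳]
    (x : Fin (2 * n) → 𝒳) (train : Finset 𝒳 → 𝒳 → Fin k → ℝ)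
    (b : Fin (2 * n) → Bool) (Idnon : Fin (2 * n) → Finset (Fin K)) (m : Fin K) :
    𝒳 → Fin k → ℝ :=
  train (((memberSet b).filter (fun j => m ∉ Idnon j)).image x)

/-- The Split-AI answer `r_i` on the query at index `i`: the average of the `L`
sub-models with indices in `Id_non(i)` if `i` is a member, and in `Id_non(i')`
otherwise. -/
def splitAIAnswer {n K k : ℕ} (L : ℕ) {𝒳 : Type*} [DecidableEq 𝒳]
    (x : Fin (2 * n) → 𝒳) (train : Finset 𝒳 → 𝒳 → Fin k → ℝ)
    (b : Fin (2 * n) → Bool) (Idnon : Fin (2 * n) → Finset (Fin K))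
    (i' i : Fin (2 * n)) : Fin k → ℝ :=
  fun c =>
    if b i then (L : ℝ)⁻¹ * ∑ m ∈ Idnon i, subModel x train b Idnon m (x i) c
    else (L : ℝ)⁻¹ * ∑ m ∈ Idnon i', subModel x train b Idnon m (x i) c

/-- The Split-AI membership-inference game at a fixed (adversarially chosen) challenge
index `i`: sample the membership vector `b` uniformly from the weight-`n` vectors, the
non-model index sets `Id_non` uniformly and independently, and `i'` uniformly from the
member set; give `(i, r_i)` to the adversary `A`, and output whether `A`'s guess
equals `b i`. -/
def splitAIGameAt {n K L k : ℕ} (hn : 0 < n) (hLK : L ≤ K) {𝒳 : Type*} [DecidableEq 𝒳]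
    (x : Fin (2 * n) → 𝒳) (train : Finset 𝒳 → 𝒳 → Fin k → ℝ)
    (A : Fin (2 * n) × (Fin k → ℝ) → PMF Bool) (i : Fin (2 * n)) : PMF Bool :=
  have h2n : 0 < 2 * n := by omega
  (PMF.uniformOfFinset (weightVectors n) (weightVectors_nonempty n)).bind fun b =>
    (PMF.uniformOfFinset (idnonFuns n K L) (idnonFuns_nonempty n K L hLK)).bind fun Idnon =>
      (uniformOn' (memberSet b) ⟨0, h2n⟩).bind fun i' =>
        (A (i, splitAIAnswer L x train b Idnon i' i)).map fun c => decide (c = b i)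

lemma memberSet_card_aux {n : ℕ} {b : Fin (2 * n) → Bool} (hb : b ∈ weightVectors n) :
    (memberSet b).card = n := by
  simpa [weightVectors, memberSet] using hb

lemma answer_swap_aux {n K k : ℕ} (L : ℕ) {𝒳 : Type*} [DecidableEq 𝒳]
    (x : Fin (2 * n) → 𝒳) (train : Finset 𝒳 → 𝒳 → Fin k → ℝ)
    (b : Fin (2 * n) → Bool) (f : Fin (2 * n) → Finset (Fin K))
    (i' i : Fin (2 * n)) (h0 : b i = false) (h1 : b i' = true) :
    splitAIAnswer L x train (b ∘ Equiv.swap i i') (f ∘ Equiv.swap i i') i' i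
      = splitAIAnswer L x train b f i' i := by
  funext c
  unfold splitAIAnswer
  simp only [Function.comp, Equiv.swap_apply_left, h0, h1, if_true]
  rw [if_neg (by simp)]
  congr 1
  refine Finset.sum_congr rfl fun m hm => ?_
  unfold subModel
  refine congrArg (fun T => train (Finset.image x T) (x i) c) ?_
  ext j
  simp only [memberSet, Finset.mem_filter, Finset.mem_univ, true_and]
  by_cases hj : j = i
  · subst hj
    simp [h0, hm]
  · by_cases hj' : j = i'
    · subst hj'
      simp [h0, hm]
    · simp only [Function.comp_apply, Equiv.swap_apply_of_ne_of_ne hj hj']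

lemma answer_indep_aux {n K k : ℕ} (L : ℕ) {𝒳 : Type*} [DecidableEq 𝒳]
    (x : Fin (2 * n) → 𝒳) (train : Finset 𝒳 → 𝒳 → Fin k → ℝ)
    (b : Fin (2 * n) → Bool) (f : Fin (2 * n) → Finset (Fin K))
    (i' i'' i : Fin (2 * n)) (h1 : b i = true) :
    splitAIAnswer L x train b f i' i = splitAIAnswer L x train b f i'' i := by
  funext c
  simp [splitAIAnswer, h1]

lemma comp_mem_weight_aux {n : ℕ} (σ : Equiv.Perm (Fin (2 * n))) {b : Fin (2 * n) → Bool}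
    (hb : b ∈ weightVectors n) : b ∘ σ ∈ weightVectors n := by
  simp only [weightVectors, Finset.mem_filter, Finset.mem_univ, true_and, Function.comp] at hb ⊢
  refine Eq.trans ?_ hb
  exact Finset.card_equiv σ (by simp)

lemma comp_mem_idnon_aux {n K L : ℕ} (σ : Equiv.Perm (Fin (2 * n)))
    {f : Fin (2 * n) → Finset (Fin K)}
    (hf : f ∈ idnonFuns n K L) : f ∘ σ ∈ idnonFuns n K L := by
  simp only [idnonFuns, Finset.mem_filter, Finset.mem_univ, true_and, Function.comp] at hf ⊢
  exact fun i => hf _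

open scoped ENNReal in
lemma transfer_aux {n K k : ℕ} (L : ℕ) {𝒳 : Type*} [DecidableEq 𝒳]
    (x : Fin (2 * n) → 𝒳) (train : Finset 𝒳 → 𝒳 → Fin k → ℝ) (i : Fin (2 * n))
    (φ : (Fin k → ℝ) → ℝ≥0∞) :
    (∑ b ∈ weightVectors n, ∑ f ∈ idnonFuns n K L, ∑ i', 
      if b i = false ∧ b i' = true then φ (splitAIAnswer L x train b f i' i) else 0)
    = ∑ b ∈ weightVectors n, ∑ f ∈ idnonFuns n K L, ∑ i', 
      if b i = true ∧ b i' = true then φ (splitAIAnswer L x train b f i' i) else 0 := by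
  have step : (∑ b ∈ weightVectors n, ∑ f ∈ idnonFuns n K L, ∑ i', 
      if b i = true ∧ b i' = true then φ (splitAIAnswer L x train b f i' i) else 0)
      = ∑ b ∈ weightVectors n, ∑ f ∈ idnonFuns n K L, ∑ i', 
      if b i = true ∧ b i' = false then φ (splitAIAnswer L x train b f i' i) else 0 := by
    refine Finset.sum_congr rfl fun b hb => Finset.sum_congr rfl fun f _ => ?_
    by_cases h : b i = true
    · simp only [h, true_and]
      simp_rw [fun i' => answer_indep_aux L x train b f i' i i h]
      rw [← Finset.sum_filter, ← Finset.sum_filter, Finset.sum_const, Finset.sum_const]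
      congr 1
      have h1 := memberSet_card_aux hb
      have h2 := Finset.card_filter_add_card_filter_not (s := (Finset.univ : Finset (Fin (2*n))))
        (fun j => b j = true)
      simp only [memberSet] at h1
      simp only [Bool.not_eq_true, Finset.card_univ, Fintype.card_fin] at h2
      omega
    · simp [h]
  rw [step]
  have swp : ∀ F : (Fin (2 * n) → Bool) → (Fin (2 * n) → Finset (Fin K)) → Fin (2*n) → ℝ≥0∞,
      (∑ b ∈ weightVectors n, ∑ f ∈ idnonFuns n K L, ∑ i', F b f i')
      = ∑ i', ∑ b ∈ weightVectors n, ∑ f ∈ idnonFuns n K L, F b f i' := by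
    intro F
    rw [Finset.sum_comm (s := Finset.univ)]
    refine Finset.sum_congr rfl fun b _ => ?_
    rw [Finset.sum_comm]
  rw [swp, swp]
  refine Finset.sum_congr rfl fun i' _ => ?_
  have inv : ∀ {α : Type} (g : Fin (2 * n) → α), (g ∘ Equiv.swap i i') ∘ Equiv.swap i i' = g := by
    intro α g; funext j; simp
  refine Finset.sum_nbij' (fun b => b ∘ Equiv.swap i i') (fun b => b ∘ Equiv.swap i i')
    (fun b hb => comp_mem_weight_aux _ hb) (fun b hb => comp_mem_weight_aux _ hb)
    (fun b _ => inv b) (fun b _ => inv b) fun b _ => ?_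
  refine Finset.sum_nbij' (fun b => b ∘ Equiv.swap i i') (fun b => b ∘ Equiv.swap i i')
    (fun b hb => comp_mem_idnon_aux _ hb) (fun b hb => comp_mem_idnon_aux _ hb)
    (fun b _ => inv b) (fun b _ => inv b) fun f _ => ?_
  by_cases h : b i = false ∧ b i' = true
  · rw [if_pos h, if_pos (by simp [h.1, h.2]), answer_swap_aux L x train b f i' i h.1 h.2]
  · rw [if_neg h, if_neg]
    simpa [and_comm] using h

open scoped ENNReal in
lemma game_apply_aux {n K L k : ℕ} (hn : 0 < n) (hLK : L ≤ K) {𝒳 : Type*} [DecidableEq 𝒳]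
    (x : Fin (2 * n) → 𝒳) (train : Finset 𝒳 → 𝒳 → Fin k → ℝ)
    (A : Fin (2 * n) × (Fin k → ℝ) → PMF Bool) (i : Fin (2 * n)) (o : Bool) :
    splitAIGameAt hn hLK x train A i o =
      ((weightVectors n).card : ℝ≥0∞)⁻¹ * (((idnonFuns n K L).card : ℝ≥0∞)⁻¹ * ((n : ℝ≥0∞)⁻¹ *
      ((∑ b ∈ weightVectors n, ∑ f ∈ idnonFuns n K L, ∑ i', 
        if b i = true ∧ b i' = true then A (i, splitAIAnswer L x train b f i' i) o else 0)
      + ∑ b ∈ weightVectors n, ∑ f ∈ idnonFuns n K L, ∑ i', 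
        if b i = false ∧ b i' = true then A (i, splitAIAnswer L x train b f i' i) (!o)
          else 0))) := by
  classical
  have ub : ∀ {α : Type} [Fintype α] (s : Finset α) (hs : s.Nonempty) (F : α → PMF Bool),
      ((PMF.uniformOfFinset s hs).bind F) o = (s.card : ℝ≥0∞)⁻¹ * ∑ a ∈ s, F a o := by
    intro α _ s hs F
    rw [PMF.bind_apply, tsum_fintype, Finset.mul_sum]
    simp [PMF.uniformOfFinset_apply, ite_mul, Finset.sum_ite_mem]
  have mp : ∀ (p : PMF Bool) (t : Bool), (p.map fun c => decide (c = t)) o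
      = if t = true then p o else p (!o) := by
    intro p t
    rw [PMF.map_apply, tsum_fintype]
    cases t <;> cases o <;> simp
  unfold splitAIGameAt
  rw [ub, ← Finset.sum_add_distrib, Finset.mul_sum, Finset.mul_sum, Finset.mul_sum, Finset.mul_sum]
  refine Finset.sum_congr rfl fun b hb => ?_
  rw [ub, ← Finset.sum_add_distrib]
  congr 2
  rw [Finset.mul_sum]
  refine Finset.sum_congr rfl fun f _ => ?_
  have hc := memberSet_card_aux hb
  have hne : (memberSet b).Nonempty := Finset.card_pos.mp (by omega)
  rw [uniformOn', dif_pos hne, ub, hc, ← Finset.sum_add_distrib]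
  congr 1
  rw [memberSet, Finset.sum_filter]
  refine Finset.sum_congr rfl fun i' _ => ?_
  rw [mp]
  cases h : b i <;> cases h' : b i' <;> simp

/-- even for a worst-case, adversarially chosen challenge index `i`,
the success probability of any direct single-query membership-inference adversary
against Split-AI is exactly `1/2`. -/
theorem splitAI_SQMI_worstCase_eq_half
    (n K L k : ℕ) (hn : 0 < n) (hL : 1 ≤ L) (hLK : L ≤ K)
    {𝒳 : Type*} [DecidableEq 𝒳]
    (x : Fin (2 * n) → 𝒳) (train : Finset 𝒳 → 𝒳 → Fin k → ℝ)
    (A : Fin (2 * n) × (Fin k → ℝ) → PMF Bool) (i : Fin (2 * n)) :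
    splitAIGameAt hn hLK x train A i true = 1 / 2 := by
  have hs : splitAIGameAt hn hLK x train A i true = splitAIGameAt hn hLK x train A i false := by
    rw [game_apply_aux, game_apply_aux,
      transfer_aux L x train i (fun r => A (i, r) (!true)),
      transfer_aux L x train i (fun r => A (i, r) (!false)), add_comm]
    rfl
  have h1 := (splitAIGameAt hn hLK x train A i).tsum_coe
  rw [tsum_fintype, Fintype.sum_bool, ← hs, ← two_mul] at h1
  rw [one_div]
  exact ENNReal.eq_inv_of_mul_eq_one_left (by rw [mul_comm]; exact h1)


end
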